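/- Let γ > 1 be a real number, let n₀, m₀ be coprime positive integers, and set α = γ^{−n₀}, β = γ^{−m₀}; assume 0 < α, β < 1/2 and τ(C_α)·τ(C_β) < 1. If 1/γ > τ(C_α)·τ(C_β), then for every real number λ, C_α − λ·C_β ≠ [−λ, 1]. -/

import Mathlib

/-!
For `l < 0` the point `0 = 0 - l * 0` of the difference set lies outside `[-l, 1]`, and for `l = 0` the
difference set is `C_α`, which omits `1/2`.

For `l > 0`, the symmetry `y ↦ 1 - y` of `C_β` turns the question into whether a point `e` of
`[0, 1 + l]` can be missing from `C_α + l * C_β`. The set `C_α` has the gap `(α^(k+1), α^k (1 - α))`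
near its left end, and `l * C_β` the gap `(l β^(j+1), l β^j (1 - β))`. If
`α^(k+1) + l β^(j+1) < e < min (α^k (1 - α)) (l β^j (1 - β))`, then `x + l w = e` forces
both `x` and `l w` to lie below these gaps, so their sum is too small (`not_mem_of_gap`).
With `s = l β^j / α^k` such an `e` exists exactly when `α / (1 - 2β) < s < (1 - 2α) / β`.
Since `n₀` and `m₀` are coprime, `s` can be made equal to `l γ^i` for any integer `i`, and the
hypothesis on the thicknesses says that the ratio of the endpoints of this interval exceeds `γ`,
so some `l γ^i` falls into it.
-/

open Set MeasureTheory

/-- The middle Cantor set `C_a`, for `0 < a < 1/2`: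
`C_a = { (1-a) * ∑ εₖ aᵏ : εₖ ∈ {0,1} }`. -/
noncomputable def middleCantor (a : ℝ) : Set ℝ :=
  {x : ℝ | ∃ ε : ℕ → Bool, x = (1 - a) * ∑' k : ℕ, (if ε k then a ^ k else 0)}

/-- The arithmetic difference `C_a - l · C_b`. -/
noncomputable def diffSet (a b l : ℝ) : Set ℝ :=
  {z : ℝ | ∃ x ∈ middleCantor a, ∃ y ∈ middleCantor b, z = x - l * y}

lemma zero_mem_middleCantor (a : ℝ) : (0 : ℝ) ∈ middleCantor a :=
  ⟨fun _ => false, by simp⟩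

lemma summable_digits {a : ℝ} (h0 : 0 < a) (h1 : a < 1) (ε : ℕ → Bool) :
    Summable (fun k : ℕ => if ε k then a ^ k else 0) := by
  refine Summable.of_nonneg_of_le (fun k => ?_) (fun k => ?_) (summable_geometric_of_lt_one h0.le h1)
  · split_ifs <;> positivity
  · split_ifs
    · exact le_rfl
    · positivity

lemma nonneg_of_mem_middleCantor {a x : ℝ} (h0 : 0 < a) (h1 : a < 1) (hx : x ∈ middleCantor a) :
    0 ≤ x := by
  obtain ⟨ε, rfl⟩ := hx
  refine mul_nonneg (by linarith) (tsum_nonneg fun k => ?_)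
  split_ifs <;> positivity

/-- Reflection symmetry, obtained by flipping all the digits. -/
lemma one_sub_mem_middleCantor {a x : ℝ} (h0 : 0 < a) (h1 : a < 1) (hx : x ∈ middleCantor a) :
    1 - x ∈ middleCantor a := by
  obtain ⟨ε, rfl⟩ := hx
  refine ⟨fun k => !ε k, ?_⟩
  have hsum : (∑' k : ℕ, (if ε k then a ^ k else 0)) + ∑' k : ℕ, (if !ε k then a ^ k else 0)
      = (1 - a)⁻¹ := by
    rw [← (summable_digits h0 h1 ε).tsum_add (summable_digits h0 h1 fun k => !ε k),
      ← tsum_geometric_of_lt_one h0.le h1]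
    refine tsum_congr fun k => ?_
    cases ε k <;> simp
  have hne : (1 - a) ≠ 0 := by linarith
  have := congrArg (fun t => (1 - a) * t) hsum
  simp only [mul_add, mul_inv_cancel₀ hne] at this
  linarith

/-- The leftmost gap of level `k`: the first alternative holds when the digits `0, …, k` all vanish,
the second when one of them does not. -/
lemma middleCantor_gap {a x : ℝ} (h0 : 0 < a) (h1 : a < 1) (hx : x ∈ middleCantor a) (k : ℕ) :
    x ≤ a ^ (k + 1) ∨ a ^ k * (1 - a) ≤ x := by
  obtain ⟨ε, rfl⟩ := hx
  have h1a : 0 < 1 - a := by linarith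
  have hs := summable_digits h0 h1 ε
  by_cases h : ∃ i ≤ k, ε i = true
  · right
    obtain ⟨i, hik, hi⟩ := h
    have h2 := hs.le_tsum i (fun j _ => by split_ifs <;> positivity)
    simp only [hi, if_true] at h2
    have h3 : a ^ k ≤ a ^ i := pow_le_pow_of_le_one h0.le h1.le hik
    rw [mul_comm]
    exact mul_le_mul_of_nonneg_left (h3.trans h2) h1a.le
  · left
    push Not at h
    rw [← hs.sum_add_tsum_nat_add (k + 1)]
    have hz : ∑ i ∈ Finset.range (k + 1), (if ε i then a ^ i else 0) = 0 := by
      refine Finset.sum_eq_zero fun i hi => ?_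
      have := h i (by simpa [Nat.lt_succ_iff] using hi)
      simp [this]
    have hg : HasSum (fun i : ℕ => a ^ (k + 1) * a ^ i) (a ^ (k + 1) * (1 - a)⁻¹) :=
      (hasSum_geometric_of_lt_one h0.le h1).mul_left _
    have hs' : Summable fun i : ℕ => if ε (i + (k + 1)) then a ^ (i + (k + 1)) else 0 :=
      hs.comp_injective (add_left_injective (k + 1))
    have ht : ∑' i : ℕ, (if ε (i + (k + 1)) then a ^ (i + (k + 1)) else 0)
        ≤ a ^ (k + 1) * (1 - a)⁻¹ := by
      rw [← hg.tsum_eq]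
      refine Summable.tsum_le_tsum (fun i => ?_) hs' hg.summable
      split_ifs
      · rw [← pow_add, add_comm i]
      · positivity
    rw [hz, zero_add]
    calc _ ≤ (1 - a) * (a ^ (k + 1) * (1 - a)⁻¹) := mul_le_mul_of_nonneg_left ht h1a.le
      _ = a ^ (k + 1) := by field_simp

/-- If `e` exceeds the sum of the bridges to the left of the two gaps, but does not reach the right
end of either gap, then `e - l` is missing from the difference set. -/
lemma not_mem_of_gap {a b l e : ℝ} (ha0 : 0 < a) (ha1 : a < 1) (hb0 : 0 < b) (hb1 : b < 1)
    (hl : 0 < l) (k j : ℕ) (h₁ : a ^ (k + 1) + l * b ^ (j + 1) < e)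
    (h₂ : e < a ^ k * (1 - a)) (h₃ : e < l * (b ^ j * (1 - b))) :
    e - l ∉ diffSet a b l := by
  rintro ⟨x, hx, y, hy, hz⟩
  have hw := one_sub_mem_middleCantor hb0 hb1 hy
  have hx0 := nonneg_of_mem_middleCantor ha0 ha1 hx
  have hw0 := mul_nonneg hl.le (nonneg_of_mem_middleCantor hb0 hb1 hw)
  have he : e = x + l * (1 - y) := by linarith
  rcases middleCantor_gap ha0 ha1 hx k with h | h
  · rcases middleCantor_gap hb0 hb1 hw j with h' | h'
    · have := mul_le_mul_of_nonneg_left h' hl.le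
      linarith
    · have := mul_le_mul_of_nonneg_left h' hl.le
      linarith
  · linarith

/-- Every integer is a combination `n k - m j` with natural coefficients. -/
lemma exists_nat_combination {n m : ℕ} (hn : 0 < n) (hm : 0 < m) (h : Nat.Coprime n m) (i : ℤ) :
    ∃ k j : ℕ, (n : ℤ) * k - m * j = i := by
  have hb : (n : ℤ) * n.gcdA m + m * n.gcdB m = 1 := by
    rw [← Nat.gcd_eq_gcd_ab, h.gcd_eq_one]; rfl
  set u := i * n.gcdA m
  set v := -(i * n.gcdB m)
  -- The Bézout coefficients `u, v` become nonnegative after adding `N * (m, n)`.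
  set N := |u| + |v|
  have hn' : (1 : ℤ) ≤ n := by exact_mod_cast hn
  have hm' : (1 : ℤ) ≤ m := by exact_mod_cast hm
  have hk : 0 ≤ u + N * m := by
    nlinarith [neg_abs_le u, abs_nonneg u, abs_nonneg v]
  have hj : 0 ≤ v + N * n := by
    nlinarith [neg_abs_le v, abs_nonneg u, abs_nonneg v]
  refine ⟨(u + N * m).toNat, (v + N * n).toNat, ?_⟩
  rw [Int.toNat_of_nonneg hk, Int.toNat_of_nonneg hj]
  simp only [u, v]
  linear_combination i * hb

/-- An interval `(A, B)` of positive reals with `B / A > γ` meets every geometric progression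
`l γ^i`, `i ∈ ℤ`. -/
lemma exists_zpow_between {γ l A B : ℝ} (hγ : 1 < γ) (hl : 0 < l) (hA : 0 < A) (hAB : γ * A < B) :
    ∃ i : ℤ, A < l * γ ^ i ∧ l * γ ^ i < B := by
  obtain ⟨n, hn1, hn2⟩ := exists_mem_Ico_zpow (div_pos hA hl) hγ
  refine ⟨n + 1, ?_, ?_⟩
  · rwa [div_lt_iff₀ hl, mul_comm] at hn2
  · rw [le_div_iff₀ hl] at hn1
    rw [zpow_add_one₀ (by positivity)]
    nlinarith

theorem stmt9 (γ : ℝ) (hγ : 1 < γ) (n₀ m₀ : ℕ) (hn₀ : 0 < n₀) (hm₀ : 0 < m₀)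
    (hcop : Nat.Coprime n₀ m₀) (α β : ℝ)
    (hαdef : α = γ ^ (-(n₀ : ℤ))) (hβdef : β = γ ^ (-(m₀ : ℤ)))
    (hα0 : 0 < α) (hα : α < 1 / 2) (hβ0 : 0 < β) (hβ : β < 1 / 2)
    (hτ : (α / (1 - 2 * α)) * (β / (1 - 2 * β)) < 1)
    (hγτ : (α / (1 - 2 * α)) * (β / (1 - 2 * β)) < 1 / γ) :
    ∀ l : ℝ, diffSet α β l ≠ Set.Icc (-l) 1 := by
  intro l heq
  rcases lt_trichotomy l 0 with hl | rfl | hl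
  · have h : (0 : ℝ) ∈ diffSet α β l :=
      ⟨0, zero_mem_middleCantor α, 0, zero_mem_middleCantor β, by simp⟩
    rw [heq] at h
    linarith [h.1]
  · have h : (1 / 2 : ℝ) ∈ diffSet α β 0 := by
      rw [heq]; constructor <;> norm_num
    obtain ⟨x, hx, y, -, hxy⟩ := h
    rcases middleCantor_gap hα0 (by linarith) hx 0 with h' | h' <;> norm_num at h' hxy <;> linarith
  · have hA : 0 < 1 - 2 * α := by linarith
    have hB : 0 < 1 - 2 * β := by linarith
    have hγ0 : 0 < γ := by linarith
    have hratio : γ * (α / (1 - 2 * β)) < (1 - 2 * α) / β := by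
      rw [lt_div_iff₀ hγ0, div_mul_div_comm, div_mul_eq_mul_div, div_lt_one (by positivity)] at hγτ
      rw [← mul_div_assoc, div_lt_div_iff₀ hB hβ0]
      linarith
    obtain ⟨i, hi1, hi2⟩ := exists_zpow_between hγ hl (div_pos hα0 hB) hratio
    obtain ⟨k, j, hkj⟩ := exists_nat_combination hn₀ hm₀ hcop i
    have hαk : 0 < α ^ k := by positivity
    have hscale : l * β ^ j = α ^ k * (l * γ ^ i) := by
      have : β ^ j = α ^ k * γ ^ i := by
        rw [hαdef, hβdef, ← zpow_natCast, ← zpow_natCast, ← zpow_mul, ← zpow_mul,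
          ← zpow_add₀ hγ0.ne', ← hkj]
        congr 1
        ring
      rw [this]; ring
    set s := l * γ ^ i
    rw [div_lt_iff₀ hB] at hi1
    rw [lt_div_iff₀ hβ0] at hi2
    obtain ⟨e, he1, he2⟩ : ∃ e, α + s * β < e ∧ e < min (s * (1 - β)) (1 - α) :=
      exists_between (lt_min (by linarith) (by linarith))
    obtain ⟨he2, he3⟩ := lt_min_iff.1 he2
    have hs : 0 < s := by positivity
    have he0 : 0 < e := by nlinarith [mul_pos hs hβ0]
    have hα1 : α ^ k ≤ 1 := pow_le_one₀ hα0.le (by linarith)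
    refine not_mem_of_gap (e := α ^ k * e) hα0 (by linarith) hβ0 (by linarith) hl k j ?_ ?_ ?_
      (heq ▸ ⟨?_, ?_⟩)
    · calc α ^ (k + 1) + l * β ^ (j + 1) = α ^ k * (α + s * β) := by
            rw [pow_succ, pow_succ]; linear_combination β * hscale
        _ < α ^ k * e := mul_lt_mul_of_pos_left he1 hαk
    · exact mul_lt_mul_of_pos_left he3 hαk
    · rw [← mul_assoc, hscale, mul_assoc]
      exact mul_lt_mul_of_pos_left he2 hαk
    · linarith [mul_pos hαk he0]
    · nlinarith
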